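/- arXiv:math/0608122 — 2 statements merged into one kernel-verified Lean document; each statement's English description precedes it below -/
import Mathlib

section
/- Let a, b ∈ ℝ and let L : (ℝ → ℝ) → (ℝ → ℝ) be scale invariant with exponents a, b, i.e., for all A, B > 0 and all f : ℝ → ℝ, L(x ↦ B f(x/A))(x) = B^b A^a (L f)(x/A). Let M̂ : ℝ × ℝ → ℝ be differentiable, let A, B : ℝ → ℝ be differentiable and strictly positive, let τ : ℝ → ℝ be differentiable, and define M(x,t) = B(τ(t)) · M̂(x / A(τ(t)), τ(t)). If M satisfies ∂M/∂t (x,t) = (L M(·,t))(x) for all x, t, then for all y ∈ ℝ and t ∈ ℝ, writing σ = τ(t): [ (B′(σ)/B(σ)) M̂(y,σ) − (A′(σ)/A(σ)) · y · ∂M̂/∂y (y,σ) + ∂M̂/∂σ (y,σ) ] · τ′(t) = A(σ)^a B(σ)^{b−1} (L M̂(·,σ))(y). -/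
/-- Dynamic renormalization of a scale-invariant evolution equation:
if `L` is scale invariant with exponents `a, b` and
`M(x,t) = B(τ(t)) M̂(x/A(τ(t)), τ(t))` solves `M_t = L M`, then the rescaled
solution satisfies
`(B'/B · M̂ − A'/A · y · M̂_y + M̂_σ) · τ' = A^a B^{b−1} (L M̂)`. -/
theorem dynamic_renormalization_equation
    (a b : ℝ) (L : (ℝ → ℝ) → (ℝ → ℝ))
    (hL : ∀ A B : ℝ, 0 < A → 0 < B → ∀ (f : ℝ → ℝ) (x : ℝ),
      L (fun z => B * f (z / A)) x = B ^ b * A ^ a * L f (x / A))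
    (Mhat : ℝ → ℝ → ℝ)
    (hMhat : Differentiable ℝ (fun p : ℝ × ℝ => Mhat p.1 p.2))
    (A B : ℝ → ℝ) (hA : Differentiable ℝ A) (hB : Differentiable ℝ B)
    (hApos : ∀ σ, 0 < A σ) (hBpos : ∀ σ, 0 < B σ)
    (τ : ℝ → ℝ) (hτ : Differentiable ℝ τ)
    (M : ℝ → ℝ → ℝ)
    (hM : ∀ x t : ℝ, M x t = B (τ t) * Mhat (x / A (τ t)) (τ t))
    (hEvol : ∀ x t : ℝ, deriv (fun s => M x s) t = L (fun y => M y t) x) :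
    ∀ (y t : ℝ),
      (deriv B (τ t) / B (τ t) * Mhat y (τ t)
        - deriv A (τ t) / A (τ t) * y * deriv (fun z => Mhat z (τ t)) y
        + deriv (fun s => Mhat y s) (τ t)) * deriv τ t
      = A (τ t) ^ a * B (τ t) ^ (b - 1) * L (fun z => Mhat z (τ t)) y := by
  intro y t
  have hA0 : A (τ t) ≠ 0 := (hApos _).ne'
  have hB0 : B (τ t) ≠ 0 := (hBpos _).ne'
  have hyA : y * A (τ t) / A (τ t) = y := by field_simp
  obtain ⟨F, hF⟩ : ∃ F : ℝ × ℝ →L[ℝ] ℝ,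
      HasFDerivAt (fun p : ℝ × ℝ => Mhat p.1 p.2) F (y, τ t) :=
    ⟨_, (hMhat (y, τ t)).hasFDerivAt⟩
  have h1 : deriv (fun z => Mhat z (τ t)) y = F (1, 0) :=
    (HasFDerivAt.comp_hasDerivAt (f := fun z : ℝ => (z, τ t)) y hF
      ((hasDerivAt_id y).prodMk (hasDerivAt_const y (τ t)))).deriv
  have h2 : deriv (fun s => Mhat y s) (τ t) = F (0, 1) :=
    (HasFDerivAt.comp_hasDerivAt (f := fun s : ℝ => (y, s)) (τ t) hF
      ((hasDerivAt_const (τ t) y).prodMk (hasDerivAt_id (τ t)))).deriv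
  have hτ' := (hτ t).hasDerivAt
  have hAτ : HasDerivAt (fun s => A (τ s)) (deriv A (τ t) * deriv τ t) t :=
    (hA (τ t)).hasDerivAt.comp t hτ'
  have hBτ : HasDerivAt (fun s => B (τ s)) (deriv B (τ t) * deriv τ t) t :=
    (hB (τ t)).hasDerivAt.comp t hτ'
  have hq := (hasDerivAt_const t (y * A (τ t))).fun_div hAτ hA0
  have hF' : HasFDerivAt (fun p : ℝ × ℝ => Mhat p.1 p.2) F
      (y * A (τ t) / A (τ t), τ t) := by rw [hyA]; exact hF
  have hc := HasFDerivAt.comp_hasDerivAt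
    (f := fun s : ℝ => (y * A (τ t) / A (τ s), τ s)) t hF' (hq.prodMk hτ')
  have hm := (hBτ.fun_mul hc).deriv
  have hlin : ∀ u v : ℝ, F (u, v) = u * F (1, 0) + v * F (0, 1) := by
    intro u v
    have : ((u, v) : ℝ × ℝ) = u • (1, 0) + v • (0, 1) := by simp
    rw [this, map_add, map_smul, map_smul, smul_eq_mul, smul_eq_mul]
  have he := hEvol (y * A (τ t)) t
  simp only [hM] at he
  rw [hL (A (τ t)) (B (τ t)) (hApos _) (hBpos _) (fun z => Mhat z (τ t)), hyA] at he
  simp only [Function.comp_def] at hm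
  rw [hm, hlin, hyA] at he
  rw [h1, h2, Real.rpow_sub_one hB0]
  field_simp at he ⊢
  linear_combination he
end

section
/- Let a, b ∈ ℝ and let L : (ℝ → ℝ) → (ℝ → ℝ) be scale invariant with exponents a, b, i.e., for all A, B > 0 and all f : ℝ → ℝ, L(x ↦ B f(x/A))(x) = B^b A^a (L f)(x/A). Let M̂ : ℝ × ℝ → ℝ be differentiable, let A, B : ℝ → ℝ be differentiable and strictly positive, let τ : ℝ → ℝ be differentiable and satisfy the time-reparametrization condition τ′(t) = A(τ(t))^a B(τ(t))^{b−1} for all t, and define M(x,t) = B(τ(t)) · M̂(x / A(τ(t)), τ(t)). If M satisfies ∂M/∂t (x,t) = (L M(·,t))(x) for all x, t, then for all y ∈ ℝ and all σ in the range of τ: ∂M̂/∂σ (y,σ) = (L M̂(·,σ))(y) − (B′(σ)/B(σ)) M̂(y,σ) + (A′(σ)/A(σ)) · y · ∂M̂/∂y (y,σ). -/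
/-- Dynamic renormalization with the canonical rescaled time `τ' = A^a B^{b−1}`:
the rescaled solution satisfies
`M̂_σ = L M̂ − (B'/B) M̂ + (A'/A) y M̂_y` at every `σ` in the range of `τ`. -/
theorem dynamic_renormalization_canonical_time
    (a b : ℝ) (L : (ℝ → ℝ) → (ℝ → ℝ))
    (hL : ∀ A B : ℝ, 0 < A → 0 < B → ∀ (f : ℝ → ℝ) (x : ℝ),
      L (fun z => B * f (z / A)) x = B ^ b * A ^ a * L f (x / A))
    (Mhat : ℝ → ℝ → ℝ)
    (hMhat : Differentiable ℝ (fun p : ℝ × ℝ => Mhat p.1 p.2))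
    (A B : ℝ → ℝ) (hA : Differentiable ℝ A) (hB : Differentiable ℝ B)
    (hApos : ∀ σ, 0 < A σ) (hBpos : ∀ σ, 0 < B σ)
    (τ : ℝ → ℝ) (hτ : Differentiable ℝ τ)
    (hτ' : ∀ t : ℝ, deriv τ t = A (τ t) ^ a * B (τ t) ^ (b - 1))
    (M : ℝ → ℝ → ℝ)
    (hM : ∀ x t : ℝ, M x t = B (τ t) * Mhat (x / A (τ t)) (τ t))
    (hEvol : ∀ x t : ℝ, deriv (fun s => M x s) t = L (fun y => M y t) x) :
    ∀ (y σ : ℝ), σ ∈ Set.range τ →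
      deriv (fun s => Mhat y s) σ
        = L (fun z => Mhat z σ) y
          - deriv B σ / B σ * Mhat y σ
          + deriv A σ / A σ * y * deriv (fun z => Mhat z σ) y := by
  rintro y σ ⟨t, rfl⟩
  have hAp := hApos (τ t)
  have hBp := hBpos (τ t)
  have hAne := hAp.ne'
  have hBne := hBp.ne'
  have hF := (hMhat (y, τ t)).hasFDerivAt
  set F := fderiv ℝ (fun p : ℝ × ℝ => Mhat p.1 p.2) (y, τ t) with hFdef
  have h2 : HasDerivAt (fun s => Mhat y s) (F (0, 1)) (τ t) :=
    HasFDerivAt.comp_hasDerivAt (l := fun p : ℝ × ℝ => Mhat p.1 p.2)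
      (f := fun s : ℝ => (y, s)) (τ t) hF
      ((hasDerivAt_const (τ t) y).prodMk (hasDerivAt_id (τ t)))
  have h1 : HasDerivAt (fun z => Mhat z (τ t)) (F (1, 0)) y :=
    HasFDerivAt.comp_hasDerivAt (l := fun p : ℝ × ℝ => Mhat p.1 p.2)
      (f := fun z : ℝ => (z, τ t)) y hF
      ((hasDerivAt_id y).prodMk (hasDerivAt_const y (τ t)))
  have hxy : y * A (τ t) / A (τ t) = y := by field_simp
  have hq : HasDerivAt (fun s => y * A (τ t) / A s)
      (-(y * deriv A (τ t) / A (τ t))) (τ t) := by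
    have h := (hasDerivAt_const (τ t) (y * A (τ t))).div (hA (τ t)).hasDerivAt hAne
    refine h.congr_deriv ?_
    field_simp
    ring
  have hF' : HasFDerivAt (fun p : ℝ × ℝ => Mhat p.1 p.2) F
      ((fun s : ℝ => (y * A (τ t) / A s, s)) (τ t)) := by
    simpa only [hxy] using hF
  have hc := HasFDerivAt.comp_hasDerivAt (l := fun p : ℝ × ℝ => Mhat p.1 p.2)
      (f := fun s : ℝ => (y * A (τ t) / A s, s)) (τ t) hF'
      (hq.prodMk (hasDerivAt_id (τ t)))
  have hsplit : F (-(y * deriv A (τ t) / A (τ t)), 1)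
      = -(y * deriv A (τ t) / A (τ t)) * F (1, 0) + F (0, 1) := by
    have : ((-(y * deriv A (τ t) / A (τ t)), 1) : ℝ × ℝ)
        = (-(y * deriv A (τ t) / A (τ t))) • ((1, 0) : ℝ × ℝ) + (0, 1) := by
      ext <;> simp
    rw [this, map_add, map_smul, smul_eq_mul]
  rw [hsplit] at hc
  have hG := ((hB (τ t)).hasDerivAt.mul hc).comp t (hτ t).hasDerivAt
  have hMd := hG.deriv
  have hfun : (fun s => M (y * A (τ t)) s)
      = ((B * ((fun p : ℝ × ℝ => Mhat p.1 p.2) ∘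
          fun s : ℝ => (y * A (τ t) / A s, s))) ∘ τ) := by
    funext s
    simp [hM]
  have hE := hEvol (y * A (τ t)) t
  have hMt : (fun z => M z t)
      = fun z => B (τ t) * (fun w => Mhat w (τ t)) (z / A (τ t)) := by
    funext z
    exact hM z t
  have hLt : L (fun z => M z t) (y * A (τ t))
      = B (τ t) ^ b * A (τ t) ^ a * L (fun w => Mhat w (τ t)) (y * A (τ t) / A (τ t)) := by
    rw [hMt]
    exact hL _ _ hAp hBp (fun w => Mhat w (τ t)) _
  rw [hfun, hMd, hLt, hxy, hτ' t] at hE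
  simp only [Function.comp, hxy] at hE
  have hpow : B (τ t) ^ b = B (τ t) ^ (b - 1) * B (τ t) := by
    rw [Real.rpow_sub_one hBne]
    field_simp
  have hk : 0 < A (τ t) ^ a * B (τ t) ^ (b - 1) :=
    mul_pos (Real.rpow_pos_of_pos hAp _) (Real.rpow_pos_of_pos hBp _)
  rw [h1.deriv, h2.deriv]
  have hE2 : deriv B (τ t) * Mhat y (τ t)
      + B (τ t) * (-(y * deriv A (τ t) / A (τ t)) * F (1, 0) + F (0, 1))
      = B (τ t) * L (fun z => Mhat z (τ t)) y := by
    apply mul_right_cancel₀ hk.ne'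
    rw [hE, hpow]
    ring
  apply mul_left_cancel₀ hBne
  have e : B (τ t) * (deriv B (τ t) / B (τ t) * Mhat y (τ t))
      = deriv B (τ t) * Mhat y (τ t) := by field_simp
  linear_combination hE2 + e
end
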